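/- There is a recursive function f : ℕ → ℕ such that every λ-flat graph on n vertices has at most f(λ)·n edges. -/

import Mathlib

/-!
Definitions for wall-by-wall distance, λ-flat graphs and ξ-nearly planar graphs,
following Grigoriev, Koutsonas and Thilikos, "Nearly Planar Graphs and λ-flat Graphs".

A plane graph is modelled combinatorially as a simple graph equipped with a rotation
system (a cyclic order of the edges incident to each vertex) that is planar, i.e.
satisfies Euler's formula (with faces counted as orbits of the face-tracing successor
on darts, corrected for isolated vertices and the number of connected components).

A graph embedding in the sphere (where edges may cross, but only at points that are
not vertices) is modelled topologically by a `Drawing`: an injective placement of the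
vertices on the unit sphere of `ℝ³` together with, for each edge, a simple arc joining
the images of its endpoints whose interior avoids all vertices.
-/

namespace WBW

/-- The set of edges of `G` incident to the vertex `v`. -/
def incidentSet {V : Type*} (G : SimpleGraph V) (v : V) : Set (Sym2 V) :=
  {e | e ∈ G.edgeSet ∧ v ∈ e}

/-- A simple graph together with a rotation system: for every vertex `v`, a
permutation of `Sym2 V` which fixes every non-incident edge and is a single cycle on
the set of edges incident to `v` (the cyclic order `σ_v` of the drawing). -/
structure RotationSystem (V : Type*) where
  G : SimpleGraph V
  rot : V → Equiv.Perm (Sym2 V)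
  rot_cycleOn : ∀ v, (rot v).IsCycleOn (incidentSet G v)
  rot_fixed : ∀ v, ∀ e ∉ incidentSet G v, rot v e = e

variable {V : Type*}

/-- The face-tracing successor on darts: the dart `(u,v)` is followed by the dart
leaving `v` along the edge succeeding `s(u,v)` in the cyclic order around `v`. -/
noncomputable def RotationSystem.faceNext (R : RotationSystem V) (d : R.G.Dart) :
    R.G.Dart :=
  have hmem : d.edge ∈ incidentSet R.G d.toProd.2 :=
    ⟨d.edge_mem, by rcases d with ⟨⟨a, b⟩, h⟩; simp [SimpleGraph.Dart.edge]⟩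
  have hmem' : R.rot d.toProd.2 d.edge ∈ incidentSet R.G d.toProd.2 :=
    (R.rot_cycleOn d.toProd.2).1.mapsTo hmem
  ⟨(d.toProd.2, Sym2.Mem.other hmem'.2), by
    have h := Sym2.other_spec hmem'.2
    have h2 : R.rot d.toProd.2 d.edge ∈ R.G.edgeSet := hmem'.1
    rw [← h] at h2
    exact h2⟩

/-- The number of faces of a rotation system: the number of orbits of the
face-tracing successor on darts. -/
noncomputable def RotationSystem.numFaces (R : RotationSystem V) : ℕ :=
  Nat.card (Quot (fun a b : R.G.Dart => R.faceNext a = b))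

/-- A rotation system is plane (it is an embedding of the graph in the sphere without
crossings) iff it satisfies Euler's formula, componentwise; isolated vertices are
accounted for separately, since they carry no dart. -/
def RotationSystem.IsPlane (R : RotationSystem V) : Prop :=
  Nat.card V + R.numFaces + Nat.card {v : V | ∀ w, ¬ R.G.Adj v w} =
    Nat.card R.G.edgeSet + 2 * Nat.card R.G.ConnectedComponent

/-- Two edges are attached if they share a vertex `v` and appear consecutively in the
cyclic order `σ_v` or its inverse. -/
def Attached (R : RotationSystem V) (e e' : Sym2 V) : Prop :=
  ∃ v : V, e ∈ incidentSet R.G v ∧ e' ∈ incidentSet R.G v ∧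
    (R.rot v e = e' ∨ R.rot v e' = e)

/-- A wall-by-wall walk: a nonempty sequence of distinct edges of `R.G` in which
every two consecutive edges are attached. -/
def IsWbwWalk (R : RotationSystem V) (L : List (Sym2 V)) : Prop :=
  L ≠ [] ∧ L.Nodup ∧ (∀ e ∈ L, e ∈ R.G.edgeSet) ∧ L.Chain' (Attached R)

/-- An `(x,y)`-wall-by-wall walk: a wall-by-wall walk whose first edge is incident to
`x` and whose last edge is incident to `y`. -/
def IsWbwWalkFromTo (R : RotationSystem V) (x y : V) (L : List (Sym2 V)) : Prop :=
  IsWbwWalk R L ∧ (∃ e, L.head? = some e ∧ x ∈ e) ∧ (∃ e, L.getLast? = some e ∧ y ∈ e)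

/-- The wall-by-wall distance between `x` and `y`: the least number of edges of an
`(x,y)`-wall-by-wall walk (`⊤` if there is no such walk). -/
noncomputable def wbwDist (R : RotationSystem V) (x y : V) : ℕ∞ :=
  sInf {n : ℕ∞ | ∃ L, IsWbwWalkFromTo R x y L ∧ (L.length : ℕ∞) = n}

/-- The `λ`-power of a plane graph: keep all edges and make adjacent all pairs of
vertices at wall-by-wall distance at most `λ`. -/
def RotationSystem.power (R : RotationSystem V) (l : ℕ) : SimpleGraph V :=
  R.G ⊔ SimpleGraph.fromRel (fun x y => wbwDist R x y ≤ (l : ℕ∞))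

/-- `H` is a subgraph of `G` via the injection `τ`. -/
def SubgraphVia {U V : Type*} (H : SimpleGraph U) (G : SimpleGraph V) (τ : U → V) :
    Prop :=
  Function.Injective τ ∧ ∀ x y, H.Adj x y → G.Adj (τ x) (τ y)

/-- A graph is `λ`-flat if it is a subgraph of the `λ`-power of some plane graph. -/
def IsFlat (l : ℕ) {V : Type*} (G : SimpleGraph V) : Prop :=
  ∃ (W : Type) (_ : Finite W) (R : RotationSystem W) (τ : V → W),
    R.IsPlane ∧ SubgraphVia G (R.power l) τ

/-- The unit sphere in `ℝ³`. -/
def unitSphere : Set (EuclideanSpace ℝ (Fin 3)) := Metric.sphere 0 1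

/-- A drawing (embedding) of a graph in the sphere: vertices are placed injectively,
every edge is drawn as a simple arc joining the images of its two endpoints, and the
interior of every arc avoids all vertex images (so edges may meet, away from their
endpoints, only at points that are not vertices). -/
structure Drawing {V : Type*} (G : SimpleGraph V) where
  vmap : V → unitSphere
  vmap_inj : Function.Injective vmap
  arc : Sym2 V → C(Set.Icc (0 : ℝ) 1, unitSphere)
  arc_inj : ∀ e ∈ G.edgeSet, Function.Injective (arc e)
  arc_ends : ∀ e ∈ G.edgeSet,
    Sym2.map vmap e =
      s(arc e ⟨0, Set.mem_Icc.mpr (by norm_num)⟩, arc e ⟨1, Set.mem_Icc.mpr (by norm_num)⟩)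
  interior_avoids : ∀ e ∈ G.edgeSet, ∀ t : Set.Icc (0 : ℝ) 1,
    (t : ℝ) ≠ 0 → (t : ℝ) ≠ 1 → arc e t ∉ Set.range vmap

/-- The crossings of the edge `e` in a drawing: pairs consisting of another edge `e'`
and a point, not a vertex, lying on the arcs of both `e` and `e'`. -/
def crossingSet {V : Type*} {G : SimpleGraph V} (D : Drawing G) (e : Sym2 V) :
    Set (Sym2 V × unitSphere) :=
  {q | q.1 ∈ G.edgeSet ∧ q.1 ≠ e ∧ q.2 ∈ Set.range (D.arc e) ∧
    q.2 ∈ Set.range (D.arc q.1) ∧ q.2 ∉ Set.range D.vmap}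

/-- A graph is `ξ`-nearly planar if it has a drawing in the sphere in which every
edge is crossed at most `ξ` times. -/
def IsNearlyPlanar (x : ℕ) {V : Type*} (G : SimpleGraph V) : Prop :=
  ∃ D : Drawing G, ∀ e ∈ G.edgeSet,
    (crossingSet D e).Finite ∧ (crossingSet D e).ncard ≤ x

/-- `λ(G)`: the least `λ` for which `G` is `λ`-flat. -/
noncomputable def flatNum {V : Type*} (G : SimpleGraph V) : ℕ :=
  sInf {l | IsFlat l G}

/-- `ξ(G)`: the least `ξ` for which `G` is `ξ`-nearly planar. -/
noncomputable def nearNum {V : Type*} (G : SimpleGraph V) : ℕ :=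
  sInf {x | IsNearlyPlanar x G}

/-- A graph is 3-connected if it has more than 3 vertices and removing any at most 2
vertices leaves it connected. -/
def ThreeConnected {V : Type*} (G : SimpleGraph V) : Prop :=
  3 < Nat.card V ∧ ∀ s : Set V, s.ncard ≤ 2 → (G.induce sᶜ).Connected

/-- A plane graph is triangulated if every face is bounded by a triangle, i.e. every
orbit of the face-tracing successor has length exactly 3. -/
def RotationSystem.Triangulated (R : RotationSystem V) : Prop :=
  ∀ d : R.G.Dart, R.faceNext (R.faceNext (R.faceNext d)) = d ∧ R.faceNext d ≠ d

/-- `H` is a topological minor of `G`: some subdivision of `H` is a subgraph of `G`,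
equivalently the branch vertices embed injectively into `G` and the edges of `H` are
realized by internally disjoint paths of `G` avoiding the branch vertices. -/
def IsTopMinor {U V : Type*} (H : SimpleGraph U) (G : SimpleGraph V) : Prop :=
  ∃ τ : U → V, Function.Injective τ ∧
    ∃ P : ∀ ⦃x y : U⦄, H.Adj x y → G.Walk (τ x) (τ y),
      (∀ ⦃x y : U⦄ (h : H.Adj x y), (P h).IsPath) ∧
      (∀ ⦃x y : U⦄ (h : H.Adj x y), ∀ v ∈ (P h).support,
        v ∈ Set.range τ → v = τ x ∨ v = τ y) ∧
      (∀ ⦃x y x' y' : U⦄ (h : H.Adj x y) (h' : H.Adj x' y'), s(x, y) ≠ s(x', y') →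
        ∀ v, v ∈ (P h).support → v ∈ (P h').support → v ∈ Set.range τ)

/-- `H` is a contraction of `G`: `H` is obtained from `G` by contracting edges,
equivalently there is a surjection `V(G) → V(H)` with connected fibres such that the
edges of `H` are exactly the pairs of distinct fibres joined by an edge of `G`. -/
def IsContractionOf {U V : Type*} (H : SimpleGraph U) (G : SimpleGraph V) : Prop :=
  ∃ f : V → U, Function.Surjective f ∧
    (∀ u : U, (G.induce (f ⁻¹' {u})).Connected) ∧
    (∀ a b : U, H.Adj a b ↔ a ≠ b ∧ ∃ x y, G.Adj x y ∧ f x = a ∧ f y = b)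

/-- The medial graph of a plane graph `G`: its vertices are the edges of `G`, two of
them being adjacent iff they are attached (this is the dual of the radial graph). -/
def medial (R : RotationSystem V) : SimpleGraph {e : Sym2 V // e ∈ R.G.edgeSet} :=
  SimpleGraph.fromRel (fun e f => Attached R e.1 f.1)

/-- The `(n × n)`-grid graph. -/
def gridGraph (n : ℕ) : SimpleGraph (Fin n × Fin n) :=
  SimpleGraph.fromRel (fun a b =>
    (a.1 = b.1 ∧ (a.2 : ℕ) + 1 = (b.2 : ℕ)) ∨ (a.2 = b.2 ∧ (a.1 : ℕ) + 1 = (b.1 : ℕ)))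

/-- The faces of a rotation system: orbits of the face-tracing successor on darts. -/
def RotationSystem.Face (R : RotationSystem V) : Type _ :=
  Quot (fun a b : R.G.Dart => R.faceNext a = b)

/-- The edge `e` lies on the boundary of the face `F`. -/
def EdgeOnFace (R : RotationSystem V) (e : Sym2 V) (F : R.Face) : Prop :=
  ∃ d : R.G.Dart, Quot.mk _ d = F ∧ d.edge = e

/-- A wall-by-wall walk passes through the face `F` if two consecutive edges of the
walk both lie on the boundary of `F`. -/
def WalkThroughFace (R : RotationSystem V) (L : List (Sym2 V)) (F : R.Face) : Prop :=
  ∃ (l₁ : List (Sym2 V)) (e₁ e₂ : Sym2 V) (l₂ : List (Sym2 V)),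
    L = l₁ ++ e₁ :: e₂ :: l₂ ∧ EdgeOnFace R e₁ F ∧ EdgeOnFace R e₂ F

end WBW

/-!
Join every vertex of the medial graph, i.e. every edge of the plane graph, to its two ends. The
result is again plane, and Euler's formula says precisely that the cuts of its dual are its cycles
modulo 2. This duality passes to minors. If a simple graph has such a dual, then it has at most
three times as many edges as vertices, because every nonempty star of the dual is a cycle of the
graph and so has at least three edges.

An edge of a `λ`-flat graph yields a walk of length at most `λ` in the medial graph. All degrees
there are at most four, so each medial vertex lies on boundedly many of these walks, and a fixed
proportion of the walks is pairwise disjoint. Contracting each of these into its starting vertex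
leaves a simple minor on the given vertices.
-/

open Module
open scoped Finset

/-! ### Dot product and orthogonality -/

section DotProduct

variable {K Y I : Type*} [Field K] [Fintype Y]

/-- The orthogonal complement of a space of `K`-valued functions on a finite type, for the dot
product. -/
def dotOrthogonal (U : Submodule K (Y → K)) : Submodule K (Y → K) :=
  LinearMap.BilinForm.orthogonal (dotProductBilin K K) U

theorem mem_dotOrthogonal {U : Submodule K (Y → K)} {z : Y → K} :
    z ∈ dotOrthogonal U ↔ ∀ v ∈ U, v ⬝ᵥ z = 0 :=
  Iff.rfl

theorem dotProductBilin_isRefl :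
    LinearMap.BilinForm.IsRefl (dotProductBilin K K : LinearMap.BilinForm K (Y → K)) :=
  fun v w h => (dotProduct_comm w v).trans h

theorem dotProductBilin_nondegenerate :
    LinearMap.BilinForm.Nondegenerate (dotProductBilin K K : LinearMap.BilinForm K (Y → K)) :=
  ⟨dotProduct_eq_zero,
    fun w h => dotProduct_eq_zero w fun v => (dotProduct_comm w v).trans (h v)⟩

theorem finrank_add_finrank_dotOrthogonal (U : Submodule K (Y → K)) :
    finrank K U + finrank K (dotOrthogonal U) = Fintype.card Y := by
  have hle := U.finrank_le
  have h := LinearMap.BilinForm.finrank_orthogonal dotProductBilin_nondegenerate U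
  rw [finrank_fintype_fun_eq_card] at hle h
  exact (congrArg (finrank K U + ·) h).trans (Nat.add_sub_cancel' hle)

theorem dotOrthogonal_dotOrthogonal (U : Submodule K (Y → K)) :
    dotOrthogonal (dotOrthogonal U) = U :=
  LinearMap.BilinForm.orthogonal_orthogonal dotProductBilin_nondegenerate
    dotProductBilin_isRefl U

theorem dotOrthogonal_anti {U U' : Submodule K (Y → K)} (h : U ≤ U') :
    dotOrthogonal U' ≤ dotOrthogonal U :=
  LinearMap.BilinForm.orthogonal_le h

theorem dotOrthogonal_inf_le (U U' : Submodule K (Y → K)) :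
    dotOrthogonal (U ⊓ U') ≤ dotOrthogonal U ⊔ dotOrthogonal U' := by
  rw [← dotOrthogonal_dotOrthogonal (dotOrthogonal U ⊔ dotOrthogonal U')]
  refine dotOrthogonal_anti (le_inf ?_ ?_)
  · exact (dotOrthogonal_anti le_sup_left).trans_eq (dotOrthogonal_dotOrthogonal U)
  · exact (dotOrthogonal_anti le_sup_right).trans_eq (dotOrthogonal_dotOrthogonal U')

theorem eq_zero_of_mem_dotOrthogonal_pi_bot {C : Set Y} {z : Y → K}
    (hz : z ∈ dotOrthogonal (Submodule.pi C fun _ => (⊥ : Submodule K K))) {y : Y}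
    (hy : y ∉ C) : z y = 0 := by
  classical
  rw [← single_one_dotProduct y z]
  refine mem_dotOrthogonal.1 hz _ (Submodule.mem_pi.2 fun y' hy' => ?_)
  exact Pi.single_eq_of_ne (ne_of_mem_of_not_mem hy' hy) 1

theorem dotProduct_comp_eq_dotProduct [Fintype I] {q : I → Y} (hq : Function.Injective q)
    {v w : Y → K} (hvw : ∀ y ∉ Set.range q, v y * w y = 0) : (v ∘ q) ⬝ᵥ (w ∘ q) = v ⬝ᵥ w :=
  Fintype.sum_of_injective q hq _ _ hvw fun _ => rfl

/- Puncturing and shortening a linear code are dual operations. -/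
theorem exists_mem_dotOrthogonal_comp_eq [Fintype I] (U : Submodule K (Y → K)) {C : Set Y}
    {q : I → Y} (hq : Function.Injective q) (hqC : ∀ i, q i ∉ C) {z : I → K}
    (hz : ∀ v ∈ U, (∀ y ∈ C, v y = 0) → (v ∘ q) ⬝ᵥ z = 0) :
    ∃ w ∈ dotOrthogonal U, (∀ y ∉ C ∪ Set.range q, w y = 0) ∧ w ∘ q = z := by
  set z' : Y → K := Function.extend q z (0 : Y → K)
  have hz'q : z' ∘ q = z := funext fun i => hq.extend_apply z _ i
  have hz'0 : ∀ y ∉ Set.range q, z' y = 0 := fun y hy => Function.extend_apply' _ _ _ hy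
  have hz' : z' ∈ dotOrthogonal (U ⊓ Submodule.pi C fun _ => (⊥ : Submodule K K)) := by
    rintro v ⟨hvU, hvC⟩
    change v ⬝ᵥ z' = 0
    rw [← dotProduct_comp_eq_dotProduct hq fun y hy => by rw [hz'0 y hy, mul_zero], hz'q]
    exact hz v hvU hvC
  obtain ⟨w, hw, k, hk, hwk⟩ := Submodule.mem_sup.1 (dotOrthogonal_inf_le _ _ hz')
  have hw_eq : ∀ y ∉ C, w y = z' y := fun y hy => by
    rw [← hwk, Pi.add_apply, eq_zero_of_mem_dotOrthogonal_pi_bot hk hy, add_zero]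
  refine ⟨w, hw, fun y hy => ?_, ?_⟩
  · rw [Set.mem_union, not_or] at hy
    rw [hw_eq y hy.1, hz'0 y hy.2]
  · rw [← hz'q]
    exact funext fun i => hw_eq (q i) (hqC i)

end DotProduct

/-! ### Multigraphs and abstract duality -/

/-- A multigraph with vertices `X` and edges `Y`, the edge `y` joining `fst y` and `snd y`. Loops
and parallel edges are allowed, and the order of the two ends is immaterial. -/
structure Multigraph (X Y : Type*) where
  fst : Y → X
  snd : Y → X

namespace Multigraph

variable {X Y F I : Type*}

/-- The connected components of a multigraph. -/
def Component (M : Multigraph X Y) : Type _ :=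
  Quot fun x x' => ∃ y, M.fst y = x ∧ M.snd y = x'

/-- The connected component of a vertex. -/
def component (M : Multigraph X Y) (x : X) : M.Component := Quot.mk _ x

/-- The multigraph on the same vertices whose edges are selected by `q`. -/
def restrict (M : Multigraph X Y) (q : I → Y) : Multigraph X I := ⟨M.fst ∘ q, M.snd ∘ q⟩

/-- The multigraph `M / C` obtained by contracting the edges in `C`, which remain as loops. -/
def contract (M : Multigraph X Y) (C : Set Y) :
    Multigraph (M.restrict ((↑) : C → Y)).Component Y :=
  ⟨(M.restrict _).component ∘ M.fst, (M.restrict _).component ∘ M.snd⟩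

/-- The edges inside the fibers of a labelling `φ` of the vertices. -/
def monochromatic {T : Type*} (M : Multigraph X Y) (φ : X → T) : Set Y :=
  {y | φ (M.fst y) = φ (M.snd y)}

/-- The connected component of a vertex inside its fiber under a labelling `φ`. -/
def fiberComponent {T : Type*} (M : Multigraph X Y) (φ : X → T) :
    X → (M.restrict ((↑) : M.monochromatic φ → Y)).Component :=
  (M.restrict _).component

/-- A multigraph without loops and parallel edges. -/
def IsSimple (M : Multigraph X Y) : Prop :=
  (∀ y, M.fst y ≠ M.snd y) ∧ Function.Injective fun y => s(M.fst y, M.snd y)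

/-- The map sending (the indicator function of) a vertex set to the edge cut it spans. -/
def cut (M : Multigraph X Y) : (X → ZMod 2) →ₗ[ZMod 2] (Y → ZMod 2) :=
  LinearMap.funLeft _ _ M.fst + LinearMap.funLeft _ _ M.snd

/-- The cycle space modulo 2, encoded as the orthogonal complement of the cut space. -/
def cycleSpace [Fintype Y] (M : Multigraph X Y) : Submodule (ZMod 2) (Y → ZMod 2) :=
  dotOrthogonal (LinearMap.range M.cut)

/-- `N` is an abstract (Whitney) dual of `M`: the cuts of `N` are the cycles of `M`. -/
def IsDual [Fintype Y] (M : Multigraph X Y) (N : Multigraph F Y) : Prop :=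
  LinearMap.range N.cut = M.cycleSpace

section Component

variable (M : Multigraph X Y)

theorem component_surjective : Function.Surjective M.component := Quot.mk_surjective

instance [Finite X] : Finite M.Component := Finite.of_surjective _ M.component_surjective

theorem component_fst_eq (y : Y) : M.component (M.fst y) = M.component (M.snd y) :=
  Quot.sound ⟨y, rfl, rfl⟩

theorem component_contract_eq {C : Set Y} {y : Y} (hy : y ∈ C) :
    (M.contract C).fst y = (M.contract C).snd y :=
  (M.restrict ((↑) : C → Y)).component_fst_eq ⟨y, hy⟩

theorem fiberComponent_eq_of_ends_eq {T : Type*} {φ : X → T} {x x' : X} {y : Y}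
    (hy : s(M.fst y, M.snd y) = s(x, x')) (hφ : φ x = φ x') :
    M.fiberComponent φ x = M.fiberComponent φ x' := by
  rcases Sym2.eq_iff.1 hy with ⟨rfl, rfl⟩ | ⟨rfl, rfl⟩
  · exact M.component_contract_eq (C := M.monochromatic φ) hφ
  · exact (M.component_contract_eq (C := M.monochromatic φ) hφ.symm).symm

theorem mem_ker_cut {u : X → ZMod 2} :
    u ∈ LinearMap.ker M.cut ↔ ∀ y, u (M.fst y) = u (M.snd y) := by
  rw [LinearMap.mem_ker, funext_iff]
  exact forall_congr' fun y => CharTwo.add_eq_zero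

theorem ker_cut : LinearMap.ker M.cut = LinearMap.range (LinearMap.funLeft _ _ M.component) := by
  ext u
  rw [mem_ker_cut]
  constructor
  · intro h
    refine ⟨Quot.lift u ?_, rfl⟩
    rintro _ _ ⟨y, rfl, rfl⟩
    exact h y
  · rintro ⟨v, rfl⟩ y
    exact congrArg v (M.component_fst_eq y)

theorem finrank_ker_cut [Finite X] :
    finrank (ZMod 2) (LinearMap.ker M.cut) = Nat.card M.Component := by
  have := Fintype.ofFinite M.Component
  rw [ker_cut, LinearMap.finrank_range_of_inj
    (LinearMap.funLeft_injective_of_surjective _ _ _ M.component_surjective),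
    finrank_fintype_fun_eq_card, Nat.card_eq_fintype_card]

theorem finrank_range_cut_add [Finite X] :
    finrank (ZMod 2) (LinearMap.range M.cut) + Nat.card M.Component = Nat.card X := by
  have := Fintype.ofFinite X
  rw [← finrank_ker_cut, LinearMap.finrank_range_add_finrank_ker, finrank_fintype_fun_eq_card,
    Nat.card_eq_fintype_card]

theorem finrank_range_cut_le (A : Finset X) (hfst : ∀ y, M.fst y ∈ A) (hsnd : ∀ y, M.snd y ∈ A) :
    finrank (ZMod 2) (LinearMap.range M.cut) ≤ #A := by
  let M' : Multigraph A Y := ⟨fun y => ⟨M.fst y, hfst y⟩, fun y => ⟨M.snd y, hsnd y⟩⟩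
  have hle : LinearMap.range M.cut ≤ LinearMap.range M'.cut := by
    rintro _ ⟨u, rfl⟩
    exact ⟨u ∘ (↑), rfl⟩
  calc finrank (ZMod 2) (LinearMap.range M.cut)
      ≤ finrank (ZMod 2) (LinearMap.range M'.cut) := Submodule.finrank_mono hle
    _ ≤ #A := by
      have := Nat.le.intro M'.finrank_range_cut_add
      rwa [Nat.card_eq_fintype_card, Fintype.card_coe] at this

theorem mem_range_cut_contract {C : Set Y} {c : Y → ZMod 2} :
    c ∈ LinearMap.range (M.contract C).cut ↔
      c ∈ LinearMap.range M.cut ∧ ∀ y ∈ C, c y = 0 := by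
  constructor
  · rintro ⟨v, rfl⟩
    refine ⟨⟨v ∘ (M.restrict _).component, rfl⟩, fun y hy => ?_⟩
    exact CharTwo.add_eq_zero.2 (congrArg v (M.component_contract_eq hy))
  · rintro ⟨⟨u, rfl⟩, hu⟩
    have hker : u ∈ LinearMap.ker (M.restrict ((↑) : C → Y)).cut :=
      LinearMap.mem_ker.2 (funext fun y => hu y y.2)
    rw [ker_cut] at hker
    obtain ⟨v, rfl⟩ := hker
    exact ⟨v, rfl⟩

theorem range_cut_restrict (q : I → Y) :
    LinearMap.range (M.restrict q).cut =
      (LinearMap.range M.cut).map (LinearMap.funLeft _ _ q) := by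
  rw [← LinearMap.range_comp]
  rfl

end Component

variable {M : Multigraph X Y} {N : Multigraph F Y}

theorem isDual_of_euler [Fintype Y] [Finite X] [Finite F]
    (horth : ∀ u s, M.cut u ⬝ᵥ N.cut s = 0)
    (heuler : Nat.card Y + Nat.card M.Component + Nat.card N.Component ≤
      Nat.card X + Nat.card F) : M.IsDual N := by
  have hle : LinearMap.range N.cut ≤ M.cycleSpace := by
    rintro _ ⟨s, rfl⟩ _ ⟨u, rfl⟩
    exact horth u s
  refine Submodule.eq_of_le_of_finrank_le hle ?_
  have hM := M.finrank_range_cut_add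
  have hN := N.finrank_range_cut_add
  have hcycle := finrank_add_finrank_dotOrthogonal (LinearMap.range M.cut)
  rw [← Nat.card_eq_fintype_card] at hcycle
  rw [cycleSpace]
  omega

theorem IsDual.minor [Fintype Y] [Fintype I] (h : M.IsDual N) {q : I → Y}
    (hq : Function.Injective q) {C : Set Y} (hqC : ∀ i, q i ∉ C) :
    ((M.contract C).restrict q).IsDual ((N.contract (C ∪ Set.range q)ᶜ).restrict q) := by
  have hdual : ∀ z, z ∈ LinearMap.range N.cut ↔ z ∈ dotOrthogonal (LinearMap.range M.cut) :=
    fun z => by rw [h, cycleSpace]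
  ext z
  rw [cycleSpace, mem_dotOrthogonal]
  simp only [range_cut_restrict, Submodule.mem_map, mem_range_cut_contract, hdual]
  constructor
  · rintro ⟨w, ⟨hw, hw0⟩, rfl⟩ _ ⟨v, ⟨hv, hv0⟩, rfl⟩
    refine (dotProduct_comp_eq_dotProduct hq fun y hy => ?_).trans (hw v hv)
    by_cases hyC : y ∈ C
    · rw [hv0 y hyC, zero_mul]
    · rw [hw0 y (by simp [hyC, hy]), mul_zero]
  · intro hz
    obtain ⟨w, hw, hw0, rfl⟩ := exists_mem_dotOrthogonal_comp_eq (LinearMap.range M.cut) hq hqC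
      fun v hv hv0 => hz _ ⟨v, ⟨hv, hv0⟩, rfl⟩
    exact ⟨w, ⟨hw, hw0⟩, rfl⟩

section Simple

theorem exists_ne_mem_ends [Fintype Y] {z : Y → ZMod 2} (hz : z ∈ M.cycleSpace) {y : Y}
    (hy : z y ≠ 0) (hloop : M.fst y ≠ M.snd y) {x : X} (hx : x ∈ s(M.fst y, M.snd y)) :
    ∃ y', y' ≠ y ∧ z y' ≠ 0 ∧ x ∈ s(M.fst y', M.snd y') := by
  classical
  by_contra! hcon
  have hstar : M.cut (Pi.single x 1) ⬝ᵥ z = 0 := hz _ ⟨_, rfl⟩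
  have hterm : ∀ y' ≠ y, M.cut (Pi.single x 1) y' * z y' = 0 := by
    intro y' hy'
    by_cases hzy' : z y' = 0
    · rw [hzy', mul_zero]
    · obtain ⟨hfst, hsnd⟩ := not_or.1 (mt Sym2.mem_iff.2 (hcon y' hy' hzy'))
      simp [cut, LinearMap.funLeft_apply, Ne.symm hfst, Ne.symm hsnd]
  rw [dotProduct, Fintype.sum_eq_single y hterm] at hstar
  have hone : M.cut (Pi.single x 1) y = 1 := by
    rcases Sym2.mem_iff.1 hx with rfl | rfl
    · simp [cut, LinearMap.funLeft_apply, hloop.symm]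
    · simp [cut, LinearMap.funLeft_apply, hloop]
  rw [hone, one_mul] at hstar
  exact hy hstar

theorem IsSimple.three_le_card_support [Fintype Y] (hM : M.IsSimple) {z : Y → ZMod 2}
    (hz : z ∈ M.cycleSpace) (hz0 : z ≠ 0) : 3 ≤ #{y | z y ≠ 0} := by
  obtain ⟨y, hy⟩ := Function.ne_iff.1 hz0
  obtain ⟨y₁, hne₁, hy₁, hmem₁⟩ := exists_ne_mem_ends hz hy (hM.1 y) (Sym2.mem_mk_left _ _)
  obtain ⟨y₂, hne₂, hy₂, hmem₂⟩ := exists_ne_mem_ends hz hy (hM.1 y) (Sym2.mem_mk_right _ _)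
  have hne : y₁ ≠ y₂ := by
    rintro rfl
    exact hne₁ (hM.2 ((Sym2.mem_and_mem_iff (hM.1 y)).1 ⟨hmem₁, hmem₂⟩))
  refine Finset.two_lt_card.2 ⟨y, ?_, y₁, ?_, y₂, ?_, hne₁.symm, hne₂.symm, hne⟩ <;> simpa

theorem finrank_range_cut_le_card_star [Fintype F] [DecidableEq F] [Fintype Y]
    (N : Multigraph F Y) :
    finrank (ZMod 2) (LinearMap.range N.cut) ≤ #{f | N.cut (Pi.single f 1) ≠ 0} := by
  have hspan : LinearMap.range N.cut ≤ Submodule.span (ZMod 2)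
      (Finset.image (fun f => N.cut (Pi.single f 1)) {f | N.cut (Pi.single f 1) ≠ 0} :
        Finset (Y → ZMod 2)) := by
    rw [LinearMap.range_eq_map, ← (Pi.basisFun (ZMod 2) F).span_eq, Submodule.map_span_le]
    rintro _ ⟨f, rfl⟩
    rw [Pi.basisFun_apply]
    by_cases hf : N.cut (Pi.single f 1) = 0
    · rw [hf]
      exact Submodule.zero_mem _
    · exact Submodule.subset_span (by simpa using ⟨f, hf, rfl⟩)
  exact (Submodule.finrank_mono hspan).trans
    ((finrank_span_finset_le_card _).trans Finset.card_image_le)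

theorem card_filter_mem_star_le [DecidableEq F] (N : Multigraph F Y) (S : Finset F) (y : Y) :
    #{f ∈ S | N.cut (Pi.single f 1) y ≠ 0} ≤ 2 := by
  suffices hsub : {f ∈ S | N.cut (Pi.single f 1) y ≠ 0} ⊆ {N.fst y, N.snd y} from
    (Finset.card_le_card hsub).trans Finset.card_le_two
  intro f hf
  have hf' := (Finset.mem_filter.1 hf).2
  contrapose! hf'
  simp only [Finset.mem_insert, Finset.mem_singleton, not_or] at hf'
  simp [cut, LinearMap.funLeft_apply, Ne.symm hf'.1, Ne.symm hf'.2]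

/- Every star of `N` is a cycle of `M`, so it is empty or has at least three edges, while each edge
lies in at most two stars. -/
theorem IsDual.card_edges_le [Fintype Y] [Finite F] (h : M.IsDual N) (hM : M.IsSimple) :
    Fintype.card Y ≤ 3 * finrank (ZMod 2) (LinearMap.range M.cut) := by
  classical
  have := Fintype.ofFinite F
  set S : Finset F := {f | N.cut (Pi.single f 1) ≠ 0}
  have hcount : #S * 3 ≤ #(Finset.univ : Finset Y) * 2 :=
    Finset.card_mul_le_card_mul (fun f y => N.cut (Pi.single f 1) y ≠ 0)
      (fun f hf => hM.three_le_card_support (h ▸ ⟨_, rfl⟩) (Finset.mem_filter.1 hf).2)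
      (fun y _ => N.card_filter_mem_star_le S y)
  have hdim := finrank_add_finrank_dotOrthogonal (LinearMap.range M.cut)
  have hstar : finrank _ (LinearMap.range N.cut) ≤ #S := N.finrank_range_cut_le_card_star
  rw [h, cycleSpace] at hstar
  rw [Finset.card_univ] at hcount
  omega

end Simple

theorem IsDual.card_le_three_mul [Fintype Y] [Finite F] [Fintype I] {T : Type*}
    (h : M.IsDual N) {φ : X → T} {q : I → Y} (hloop : ∀ i, φ (M.fst (q i)) ≠ φ (M.snd (q i)))
    (hparallel : Function.Injective fun i => s(φ (M.fst (q i)), φ (M.snd (q i)))) (A : Finset X)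
    (hfst : ∀ i, ∃ a ∈ A, M.fiberComponent φ (M.fst (q i)) = M.fiberComponent φ a)
    (hsnd : ∀ i, ∃ a ∈ A, M.fiberComponent φ (M.snd (q i)) = M.fiberComponent φ a) :
    Fintype.card I ≤ 3 * #A := by
  classical
  let ψ : (M.restrict ((↑) : M.monochromatic φ → Y)).Component → T := Quot.lift φ <| by
    rintro _ _ ⟨y, rfl, rfl⟩
    exact y.2
  have hq : Function.Injective q := fun i j hij => hparallel (by simp only [hij])
  have hsimple : ((M.contract (M.monochromatic φ)).restrict q).IsSimple :=
    ⟨fun i hi => hloop i (congrArg ψ hi),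
      fun i j hij => hparallel (congrArg (Sym2.map ψ) hij)⟩
  have hends : ∀ x, (∃ a ∈ A, x = M.fiberComponent φ a) → x ∈ A.image (M.fiberComponent φ) :=
    fun x ⟨a, ha, hx⟩ => Finset.mem_image.2 ⟨a, ha, hx.symm⟩
  calc Fintype.card I
      ≤ 3 * finrank (ZMod 2)
          (LinearMap.range ((M.contract (M.monochromatic φ)).restrict q).cut) :=
        (h.minor hq hloop).card_edges_le hsimple
    _ ≤ 3 * #(A.image (M.fiberComponent φ)) := Nat.mul_le_mul_left 3 <|
        finrank_range_cut_le _ _ (fun i => hends _ (hfst i)) fun i => hends _ (hsnd i)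
    _ ≤ 3 * #A := Nat.mul_le_mul_left 3 Finset.card_image_le

end Multigraph

/-! ### The augmented medial graph -/

theorem apply_eq_of_walk {V T : Type*} {G : SimpleGraph V} {f : V → T} {u v : V} (p : G.Walk u v)
    (h : ∀ a ∈ p.support, ∀ b ∈ p.support, G.Adj a b → f a = f b) : f u = f v := by
  induction p with
  | nil => rfl
  | cons hadj p ih =>
    simp only [SimpleGraph.Walk.support_cons, List.forall_mem_cons] at h
    exact (h.1.2 _ p.start_mem_support hadj).trans (ih fun a ha => (h.2 a ha).2)

theorem card_le_card_connectedComponent {W T : Type*} [Finite W] {G : SimpleGraph W} {f : W → T}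
    (hf : Function.Surjective f) (hadj : ∀ ⦃v w⦄, G.Adj v w → f v = f w) :
    Nat.card T ≤ Nat.card G.ConnectedComponent := by
  let g : G.ConnectedComponent → T :=
    SimpleGraph.ConnectedComponent.lift f fun _ _ p _ =>
      apply_eq_of_walk p fun _ _ _ _ hab => hadj hab
  exact Nat.card_le_card_of_surjective g
    (Function.Surjective.of_comp (g := G.connectedComponentMk) hf)

namespace WBW

namespace RotationSystem

open SimpleGraph Sum Function

variable {W : Type*} (R : RotationSystem W)

instance [Finite W] : Finite R.G.Dart := Finite.of_injective _ Dart.toProd_injective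

instance [Finite W] : Finite R.Face := Quot.finite _

section RotDart

variable {R} in
theorem dart_eq_of_edge_eq_of_snd_eq {d d' : R.G.Dart} (hedge : d.edge = d'.edge)
    (hsnd : d.snd = d'.snd) : d = d' := by
  refine (dart_edge_eq_iff d d').1 hedge |>.resolve_right ?_
  rintro rfl
  exact d'.fst_ne_snd hsnd

theorem edge_faceNext (d : R.G.Dart) : (R.faceNext d).edge = R.rot d.snd d.edge := by
  unfold faceNext
  simp only [Dart.edge, Sym2.other_spec]

/-- The dart into the head of `d` whose edge follows the edge of `d` in the cyclic order there. -/
noncomputable def rotDart (d : R.G.Dart) : R.G.Dart := (R.faceNext d).symm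

theorem edge_rotDart (d : R.G.Dart) : (R.rotDart d).edge = R.rot d.snd d.edge := by
  rw [rotDart, Dart.edge_symm, edge_faceNext]

theorem rotDart_injective : Injective R.rotDart := by
  intro d d' h
  have hsnd : d.snd = d'.snd := congrArg (·.snd) h
  refine dart_eq_of_edge_eq_of_snd_eq ((R.rot d.snd).injective ?_) hsnd
  rw [← edge_rotDart, h, edge_rotDart, hsnd]

theorem faceNext_injective : Injective R.faceNext :=
  fun _ _ h => R.rotDart_injective (congrArg Dart.symm h)

theorem rotDart_bijective [Finite R.G.Dart] : Bijective R.rotDart :=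
  Finite.injective_iff_bijective.1 R.rotDart_injective

theorem faceNext_bijective [Finite R.G.Dart] : Bijective R.faceNext :=
  Finite.injective_iff_bijective.1 R.faceNext_injective

theorem snd_iterate_rotDart (n : ℕ) (d : R.G.Dart) : (R.rotDart^[n] d).snd = d.snd := by
  induction n generalizing d with
  | zero => rfl
  | succ _ ih => exact ih (R.rotDart d)

theorem edge_iterate_rotDart (n : ℕ) (d : R.G.Dart) :
    (R.rotDart^[n] d).edge = (R.rot d.snd ^ n) d.edge := by
  induction n with
  | zero => rfl
  | succ n ih =>
    rw [iterate_succ_apply', edge_rotDart, snd_iterate_rotDart, ih, pow_succ',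
      Equiv.Perm.mul_apply]

theorem edge_mem_incidentSet_snd (d : R.G.Dart) : d.edge ∈ incidentSet R.G d.snd :=
  ⟨d.edge_mem, Sym2.mem_mk_right _ _⟩

theorem exists_iterate_rotDart_eq [Finite W] {d d' : R.G.Dart} (h : d.snd = d'.snd) :
    ∃ n, R.rotDart^[n] d = d' := by
  obtain ⟨n, hn⟩ := (R.rot_cycleOn d.snd).exists_pow_eq' (Set.toFinite _)
    (R.edge_mem_incidentSet_snd d) (h ▸ R.edge_mem_incidentSet_snd d')
  refine ⟨n, dart_eq_of_edge_eq_of_snd_eq ?_ ((R.snd_iterate_rotDart n d).trans h)⟩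
  rw [edge_iterate_rotDart, hn]

end RotDart

/-- The edge underlying a dart, as an element of the edge set. -/
def dartEdge (d : R.G.Dart) : R.G.edgeSet := ⟨d.edge, d.edge_mem⟩

theorem dartEdge_symm (d : R.G.Dart) : R.dartEdge d.symm = R.dartEdge d :=
  Subtype.ext d.edge_symm

theorem dartEdge_surjective : Surjective R.dartEdge := by
  rintro ⟨e, he⟩
  induction e with | _ v w => exact ⟨⟨(v, w), he⟩, rfl⟩

/-- The face of a plane graph to the side of a dart. -/
def dartFace (d : R.G.Dart) : R.Face := Quot.mk _ d

theorem dartFace_surjective : Surjective R.dartFace := Quot.mk_surjective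

theorem dartFace_faceNext (d : R.G.Dart) : R.dartFace (R.faceNext d) = R.dartFace d :=
  (Quot.sound (r := fun a b => R.faceNext a = b) rfl).symm

/-- The medial graph together with the original vertices, each joined to all its incident edges.
The edge `inr d` cuts the corner between `d` and `rotDart d`; the edge `inl d` joins the end of `d`
to the edge of `rotDart d`, which is indexed this way so that its two sides are the corners of `d`
and of `rotDart d`. -/
noncomputable def augmentedMedial : Multigraph (W ⊕ R.G.edgeSet) (R.G.Dart ⊕ R.G.Dart) where
  fst := Sum.elim (fun d => inr (R.dartEdge (R.rotDart d))) fun d => inr (R.dartEdge d)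
  snd := Sum.elim (fun d => inl d.snd) fun d => inr (R.dartEdge (R.rotDart d))

/-- The plane dual of `augmentedMedial`. Its vertices are the faces of the plane graph and the
triangles `inr d` that corners cut off. -/
noncomputable def augmentedMedialDual : Multigraph (R.Face ⊕ R.G.Dart) (R.G.Dart ⊕ R.G.Dart) where
  fst := Sum.elim inr inr
  snd := Sum.elim (fun d => inr (R.rotDart d)) fun d => inl (R.dartFace d)

theorem sum_add_comp_eq_zero {D : Type*} [Fintype D] {σ : D → D} (hσ : Bijective σ)
    (h : D → ZMod 2) : ∑ d, (h d + h (σ d)) = 0 := by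
  rw [Finset.sum_add_distrib, hσ.sum_comp, CharTwo.add_self_eq_zero]

theorem cut_dotProduct_cut_eq_zero [Fintype R.G.Dart] (u : W ⊕ R.G.edgeSet → ZMod 2)
    (s : R.Face ⊕ R.G.Dart → ZMod 2) :
    R.augmentedMedial.cut u ⬝ᵥ R.augmentedMedialDual.cut s = 0 := by
  let a : R.G.Dart → ZMod 2 := fun d => u (inr (R.dartEdge d))
  let w : R.G.Dart → ZMod 2 := fun d => u (inl d.snd)
  let t : R.G.Dart → ZMod 2 := fun d => s (inr d)
  let f : R.G.Dart → ZMod 2 := fun d => s (inl (R.dartFace d))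
  have hw : ∀ d, w (R.rotDart d) = w d := fun d => rfl
  have ha : ∀ d, a (R.faceNext d) = a (R.rotDart d) := fun d =>
    congrArg (u ∘ inr) (R.dartEdge_symm _).symm
  have hf : ∀ d, f (R.faceNext d) = f d := fun d => congrArg (s ∘ inl) (R.dartFace_faceNext d)
  calc R.augmentedMedial.cut u ⬝ᵥ R.augmentedMedialDual.cut s
      = ∑ d, (a (R.rotDart d) + w d) * (t d + t (R.rotDart d))
          + ∑ d, (a d + a (R.rotDart d)) * (t d + f d) := Fintype.sum_sum_type _
    _ = ∑ d, (a d * t d + a (R.rotDart d) * t (R.rotDart d))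
          + ∑ d, (w d * t d + w (R.rotDart d) * t (R.rotDart d))
          + ∑ d, (a d * f d + a (R.faceNext d) * f (R.faceNext d)) := by
        simp only [← Finset.sum_add_distrib, hw, ha, hf]
        refine Finset.sum_congr rfl fun d _ => ?_
        linear_combination a (R.rotDart d) * t d * CharTwo.two_eq_zero (R := ZMod 2)
    _ = 0 := by
        rw [sum_add_comp_eq_zero R.rotDart_bijective fun d => a d * t d,
          sum_add_comp_eq_zero R.rotDart_bijective fun d => w d * t d,
          sum_add_comp_eq_zero R.faceNext_bijective fun d => a d * f d, add_zero, add_zero]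

section Component

theorem component_dual_dartFace (d : R.G.Dart) :
    R.augmentedMedialDual.component (inl (R.dartFace d)) =
      R.augmentedMedialDual.component (inr d) :=
  (R.augmentedMedialDual.component_fst_eq (inr d)).symm

theorem component_dual_rotDart (d : R.G.Dart) :
    R.augmentedMedialDual.component (inr (R.rotDart d)) =
      R.augmentedMedialDual.component (inr d) :=
  (R.augmentedMedialDual.component_fst_eq (inl d)).symm

variable [Finite W]

theorem component_dartEdge (d : R.G.Dart) :
    R.augmentedMedial.component (inr (R.dartEdge d)) =
      R.augmentedMedial.component (inl d.snd) := by
  obtain ⟨d, rfl⟩ := R.rotDart_bijective.surjective d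
  exact R.augmentedMedial.component_fst_eq (inl d)

theorem card_component_augmentedMedial_le :
    Nat.card R.augmentedMedial.Component ≤ Nat.card R.G.ConnectedComponent := by
  refine card_le_card_connectedComponent (f := R.augmentedMedial.component ∘ inl) ?_ ?_
  · intro c
    obtain ⟨v | e, rfl⟩ := R.augmentedMedial.component_surjective c
    · exact ⟨v, rfl⟩
    · obtain ⟨d, rfl⟩ := R.dartEdge_surjective e
      exact ⟨d.snd, (R.component_dartEdge d).symm⟩
  · intro v w hvw
    let d : R.G.Dart := ⟨(v, w), hvw⟩
    exact (R.component_dartEdge d.symm).symm.trans <|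
      (congrArg _ (congrArg inr (R.dartEdge_symm d))).trans (R.component_dartEdge d)

theorem component_dual_symm (d : R.G.Dart) :
    R.augmentedMedialDual.component (inr d.symm) = R.augmentedMedialDual.component (inr d) := by
  obtain ⟨d, rfl⟩ := R.faceNext_bijective.surjective d
  calc R.augmentedMedialDual.component (inr (R.rotDart d))
      = R.augmentedMedialDual.component (inr d) := R.component_dual_rotDart d
    _ = R.augmentedMedialDual.component (inr (R.faceNext d)) := by
      rw [← component_dual_dartFace, ← component_dual_dartFace, dartFace_faceNext]

theorem component_dual_eq_of_snd_eq {d d' : R.G.Dart} (h : d.snd = d'.snd) :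
    R.augmentedMedialDual.component (inr d) = R.augmentedMedialDual.component (inr d') := by
  obtain ⟨n, rfl⟩ := R.exists_iterate_rotDart_eq h
  induction n with
  | zero => rfl
  | succ n ih =>
    rw [iterate_succ_apply', component_dual_rotDart]
    exact ih (R.snd_iterate_rotDart n d).symm

theorem card_component_augmentedMedialDual_le :
    Nat.card R.augmentedMedialDual.Component + Nat.card {v : W | ∀ w, ¬R.G.Adj v w} ≤
      Nat.card R.G.ConnectedComponent := by
  classical
  have hdart : ∀ v, ¬(∀ w, ¬R.G.Adj v w) → ∃ d : R.G.Dart, d.snd = v := by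
    rintro v hv
    obtain ⟨w, hvw⟩ := not_forall_not.1 hv
    exact ⟨⟨(w, v), hvw.symm⟩, rfl⟩
  let f : W → R.augmentedMedialDual.Component ⊕ {v : W | ∀ w, ¬R.G.Adj v w} := fun v =>
    if hv : ∀ w, ¬R.G.Adj v w then inr ⟨v, hv⟩
    else inl (R.augmentedMedialDual.component (inr (hdart v hv).choose))
  have hf : ∀ d : R.G.Dart, f d.snd = inl (R.augmentedMedialDual.component (inr d)) := fun d => by
    have hv : ¬∀ w, ¬R.G.Adj d.snd w := fun h => h _ d.adj.symm
    rw [show f d.snd = _ from dif_neg hv, R.component_dual_eq_of_snd_eq (hdart _ hv).choose_spec]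
  have hf_surj : Surjective f := by
    rintro (c | ⟨v, hv⟩)
    · obtain ⟨F | d, rfl⟩ := R.augmentedMedialDual.component_surjective c
      · obtain ⟨d, rfl⟩ := R.dartFace_surjective F
        exact ⟨d.snd, (hf d).trans (congrArg inl (R.component_dual_dartFace d).symm)⟩
      · exact ⟨d.snd, hf d⟩
    · exact ⟨v, dif_pos hv⟩
  have hf_adj : ∀ ⦃v w⦄, R.G.Adj v w → f v = f w := fun v w hvw => by
    let d : R.G.Dart := ⟨(v, w), hvw⟩
    exact (hf d.symm).trans ((congrArg inl (R.component_dual_symm d)).trans (hf d).symm)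
  rw [← Nat.card_sum]
  exact card_le_card_connectedComponent hf_surj hf_adj

end Component

theorem card_dart [Finite W] : Nat.card R.G.Dart = 2 * Nat.card R.G.edgeSet := by
  classical
  have := Fintype.ofFinite W
  rw [Nat.card_eq_fintype_card, dart_card_eq_twice_card_edges, Nat.card_eq_fintype_card,
    edgeFinset_card]

variable {R} in
theorem IsPlane.isDual [Finite W] [Fintype R.G.Dart] (h : R.IsPlane) :
    R.augmentedMedial.IsDual R.augmentedMedialDual := by
  refine Multigraph.isDual_of_euler R.cut_dotProduct_cut_eq_zero ?_
  have hM := R.card_component_augmentedMedial_le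
  have hN := R.card_component_augmentedMedialDual_le
  have hplane : Nat.card W + Nat.card R.Face + _ = _ := h
  simp only [Nat.card_sum, card_dart]
  omega

theorem exists_augmentedMedial_halfEdge [Finite W] {v : W} {e : R.G.edgeSet}
    (hv : v ∈ (e : Sym2 W)) :
    ∃ y, R.augmentedMedial.fst y = inr e ∧ R.augmentedMedial.snd y = inl v := by
  obtain ⟨e, he⟩ := e
  obtain ⟨w, rfl⟩ := Sym2.mem_iff_exists.1 hv
  obtain ⟨d, hd⟩ := R.rotDart_bijective.surjective ⟨(w, v), SimpleGraph.Adj.symm he⟩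
  refine ⟨inl d, congrArg inr (Subtype.ext ?_), congrArg (fun d : R.G.Dart => inl d.snd) hd⟩
  exact (congrArg Dart.edge hd).trans Sym2.eq_swap

theorem exists_augmentedMedial_corner {e f : R.G.edgeSet} (h : (medial R).Adj e f) :
    ∃ y, s(R.augmentedMedial.fst y, R.augmentedMedial.snd y) = s(inr e, inr f) := by
  have hrot : ∀ (e f : R.G.edgeSet) (v : W), v ∈ (e : Sym2 W) → R.rot v e = f →
      ∃ y, s(R.augmentedMedial.fst y, R.augmentedMedial.snd y) = s(inr e, inr f) := by
    rintro ⟨e, he⟩ f v hv hf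
    obtain ⟨w, rfl⟩ := Sym2.mem_iff_exists.1 hv
    let d : R.G.Dart := ⟨(w, v), SimpleGraph.Adj.symm he⟩
    have hd : d.edge = s(v, w) := Sym2.eq_swap
    have hde : R.dartEdge d = ⟨s(v, w), he⟩ := Subtype.ext hd
    have hdf : R.dartEdge (R.rotDart d) = f :=
      Subtype.ext ((R.edge_rotDart d).trans (hd ▸ hf))
    exact ⟨inr d, congrArg₂ (fun e f => s(inr e, inr f)) hde hdf⟩
  obtain ⟨-, ⟨v, he, hf, hef | hfe⟩ | ⟨v, hf, he, hfe | hef⟩⟩ := h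
  · exact hrot e f v he.2 hef
  · exact Sym2.eq_swap (α := W ⊕ R.G.edgeSet) ▸ hrot f e v hf.2 hfe
  · exact Sym2.eq_swap (α := W ⊕ R.G.edgeSet) ▸ hrot f e v hf.2 hfe
  · exact hrot e f v he.2 hef

theorem fiberComponent_end_eq_of_walk [Finite W] {T : Type*} {φ : W ⊕ R.G.edgeSet → T}
    {e f : R.G.edgeSet} (p : (medial R).Walk e f) {v : W} (hv : v ∈ (e : Sym2 W))
    (hφ : ∀ g ∈ p.support, φ (inr g) = φ (inl v)) :
    R.augmentedMedial.fiberComponent φ (inr f) = R.augmentedMedial.fiberComponent φ (inl v) := by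
  obtain ⟨c, hc⟩ := R.exists_augmentedMedial_halfEdge hv
  have hstart : R.augmentedMedial.fiberComponent φ (inr e) =
      R.augmentedMedial.fiberComponent φ (inl v) :=
    Multigraph.fiberComponent_eq_of_ends_eq _ (congrArg₂ (s(·, ·)) hc.1 hc.2)
      (hφ _ p.start_mem_support)
  refine (apply_eq_of_walk (f := R.augmentedMedial.fiberComponent φ ∘ inr) p
    fun a ha b hb hab => ?_).symm.trans hstart
  obtain ⟨c, hc⟩ := R.exists_augmentedMedial_corner hab
  exact Multigraph.fiberComponent_eq_of_ends_eq _ hc ((hφ a ha).trans (hφ b hb).symm)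

/-- The labelling of `V ⊕ E` that merges the elements of `S i` with `x i`, for pairwise disjoint
sets `S i`. -/
noncomputable def mergeLabel {I V E : Type*} (S : I → Set E) (x : I → V) : V ⊕ E → V ⊕ E :=
  open Classical in
  Sum.elim inl fun g => if h : ∃ i, g ∈ S i then inl (x h.choose) else inr g

theorem mergeLabel_inr {I V E : Type*} {S : I → Set E} (hS : Pairwise (Disjoint on S))
    (x : I → V) {i : I} {g : E} (hg : g ∈ S i) : mergeLabel S x (inr g) = inl (x i) := by
  have h : ∃ i, g ∈ S i := ⟨i, hg⟩
  have hi : h.choose = i := hS.eq (Set.not_disjoint_iff.2 ⟨g, h.choose_spec, hg⟩)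
  rw [show mergeLabel S x (inr g) = _ from dif_pos h, hi]

/- Contracting each walk, together with the half-edge at its start `x i`, leaves the half-edges at
the ends `y i` as the edges of a simple graph on `U`. -/
variable {R} in
theorem IsPlane.card_le_of_disjoint_walks [Finite W] {I : Type*} [Fintype I] (hR : R.IsPlane)
    {e f : I → R.G.edgeSet} (p : ∀ i, (medial R).Walk (e i) (f i))
    (hdisj : Pairwise (Disjoint on fun i => {g | g ∈ (p i).support})) {x y : I → W}
    (hx : ∀ i, x i ∈ (e i : Sym2 W)) (hy : ∀ i, y i ∈ (f i : Sym2 W)) (hne : ∀ i, x i ≠ y i)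
    (hinj : Injective fun i => s(x i, y i)) {U : Finset W} (hxU : ∀ i, x i ∈ U)
    (hyU : ∀ i, y i ∈ U) : Fintype.card I ≤ 3 * #U := by
  classical
  have := Fintype.ofFinite R.G.Dart
  let φ := mergeLabel (fun i => {g | g ∈ (p i).support}) x
  have hφ : ∀ i, ∀ g ∈ (p i).support, φ (inr g) = inl (x i) := fun i g hg =>
    mergeLabel_inr hdisj x hg
  choose q hqfst hqsnd using fun i => R.exists_augmentedMedial_halfEdge (hy i)
  have hφfst : ∀ i, φ (R.augmentedMedial.fst (q i)) = inl (x i) := fun i =>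
    (congrArg φ (hqfst i)).trans (hφ i _ (p i).end_mem_support)
  have hφsnd : ∀ i, φ (R.augmentedMedial.snd (q i)) = inl (y i) := fun i => congrArg φ (hqsnd i)
  rw [← Finset.card_map (s := U) Embedding.inl]
  refine hR.isDual.card_le_three_mul (φ := φ) (q := q) (fun i => ?_) (fun i j hij => ?_)
    (U.map (Embedding.inl (β := R.G.edgeSet)))
    (fun i => ⟨inl (x i), Finset.mem_map_of_mem _ (hxU i), ?_⟩)
    fun i => ⟨inl (y i), Finset.mem_map_of_mem _ (hyU i), congrArg _ (hqsnd i)⟩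
  · rw [hφfst, hφsnd]
    exact inl_injective.ne (hne i)
  · simp only [hφfst, hφsnd] at hij
    exact hinj (Sym2.map.injective inl_injective hij)
  · rw [hqfst]
    exact R.fiberComponent_end_eq_of_walk (p i) (hx i) (hφ i)

end RotationSystem

end WBW

/-! ### Sparsity of flat graphs -/

theorem card_edist_le_le_pow {V : Type*} [Fintype V] {G : SimpleGraph V} {d : ℕ}
    (hd : ∀ v, (G.neighborSet v).ncard ≤ d) (v : V) (n : ℕ) [DecidablePred (G.edist v · ≤ n)] :
    #{w | G.edist v w ≤ n} ≤ (d + 1) ^ n := by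
  classical
  induction n generalizing v with
  | zero => simp [Finset.filter_eq]
  | succ n ih =>
    let N : Finset V := insert v (G.neighborFinset v)
    have hN : #N ≤ d + 1 := by
      have h := hd v
      rw [← SimpleGraph.coe_neighborFinset, Set.ncard_coe_finset] at h
      exact (Finset.card_insert_le _ _).trans (Nat.add_le_add_right h 1)
    suffices hsub : ({w | G.edist v w ≤ ↑(n + 1)} : Finset V) ⊆
        N.biUnion fun u => {w | G.edist u w ≤ n} by
      calc #{w | G.edist v w ≤ ↑(n + 1)}
          ≤ #N * (d + 1) ^ n :=
            (Finset.card_le_card hsub).trans (Finset.card_biUnion_le_card_mul _ _ _ fun u _ => ih u)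
        _ ≤ (d + 1) ^ (n + 1) := by
            rw [pow_succ']
            exact Nat.mul_le_mul_right _ hN
    intro w hw
    have hw' : G.edist v w ≤ ↑(n + 1) := (Finset.mem_filter.1 hw).2
    obtain ⟨p, hp⟩ :=
      SimpleGraph.exists_walk_of_edist_ne_top (hw'.trans_lt (ENat.natCast_lt_top _)).ne
    rw [← hp, Nat.cast_le] at hw'
    refine Finset.mem_biUnion.2 ?_
    cases p with
    | nil => exact ⟨v, Finset.mem_insert_self _ _, by simp⟩
    | @cons _ u _ hvu p =>
      have hu : u ∈ N := Finset.mem_insert_of_mem ((G.mem_neighborFinset v u).2 hvu)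
      have hlen : p.length ≤ n := Nat.le_of_succ_le_succ hw'
      exact ⟨u, hu, by simpa using p.edist_le.trans (Nat.cast_le.2 hlen)⟩

theorem exists_pairwiseDisjoint_card_le {I A : Type*} [Fintype I] [DecidableEq A] {S : I → Finset A}
    {m k : ℕ} (hne : ∀ i, (S i).Nonempty) (hm : ∀ i, #(S i) ≤ m) (hk : ∀ a, #{i | a ∈ S i} ≤ k) :
    ∃ J : Finset I, (J : Set I).PairwiseDisjoint S ∧ Fintype.card I ≤ #J * (m * k) := by
  classical
  obtain ⟨J, hJ, hmax⟩ :=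
    (Set.toFinite {J : Finset I | (J : Set I).PairwiseDisjoint S}).exists_maximal ⟨∅, by simp⟩
  have hcover : ∀ i, ∃ j ∈ J, ∃ a ∈ S j, a ∈ S i := by
    intro i
    by_contra! hi
    have hdisj : ∀ j ∈ J, Disjoint (S i) (S j) := fun j hj =>
      (Finset.disjoint_left.2 (hi j hj)).symm
    have hins : (insert i J : Finset I) ≤ J := hmax
      (show ((insert i J : Finset I) : Set I).PairwiseDisjoint S by
        rw [Finset.coe_insert]
        exact hJ.insert fun j hj _ => hdisj j hj) (Finset.subset_insert i J)
    obtain ⟨a, ha⟩ := hne i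
    exact hi i (hins (Finset.mem_insert_self i J)) a ha ha
  refine ⟨J, hJ, ?_⟩
  calc Fintype.card I
      ≤ #(J.biUnion fun j => (S j).biUnion fun a => {i | a ∈ S i}) :=
        Finset.card_le_card fun i _ => by simpa using hcover i
    _ ≤ #J * (m * k) := Finset.card_biUnion_le_card_mul _ _ _ fun j _ =>
        (Finset.card_biUnion_le_card_mul _ _ _ fun a _ => hk a).trans
          (Nat.mul_le_mul_right k (hm j))

namespace WBW

variable {W : Type*} (R : RotationSystem W)

theorem ncard_neighborSet_medial_le (e : R.G.edgeSet) :
    ((medial R).neighborSet e).ncard ≤ 4 := by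
  classical
  obtain ⟨e, he⟩ := e
  induction e with | _ a b =>
  let e : Sym2 W := s(a, b)
  let T : Finset (Sym2 W) := {R.rot a e, (R.rot a).symm e, R.rot b e, (R.rot b).symm e}
  suffices hT : Subtype.val '' (medial R).neighborSet ⟨e, he⟩ ⊆ (T : Set (Sym2 W)) by
    rw [← Set.ncard_image_of_injective _ Subtype.val_injective]
    exact (Set.ncard_le_ncard hT).trans ((Set.ncard_coe_finset T).trans_le Finset.card_le_four)
  have hrot : ∀ v ∈ e, ∀ f, R.rot v e = f ∨ R.rot v f = e → f ∈ T := by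
    intro v hv f hf
    have hf' : f = R.rot v e ∨ f = (R.rot v).symm e := hf.imp Eq.symm (Equiv.eq_symm_apply _).2
    simp only [T, Finset.mem_insert, Finset.mem_singleton]
    rcases Sym2.mem_iff.1 hv with rfl | rfl <;> tauto
  rintro _ ⟨f, ⟨-, ⟨v, he, -, h⟩ | ⟨v, -, he, h⟩⟩, rfl⟩
  · exact hrot v he.2 f h
  · exact hrot v he.2 f h.symm

theorem card_filter_mem_support_le [Finite W] {I : Type*} [Fintype I] {e f : I → R.G.edgeSet}
    (p : ∀ i, (medial R).Walk (e i) (f i)) {l : ℕ} (hl : ∀ i, (p i).length ≤ l) {x y : I → W}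
    (hx : ∀ i, x i ∈ (e i : Sym2 W)) (hy : ∀ i, y i ∈ (f i : Sym2 W))
    (hinj : Function.Injective fun i => s(x i, y i)) (g : R.G.edgeSet)
    [DecidablePred fun i => g ∈ (p i).support] :
    #{i | g ∈ (p i).support} ≤ (2 * 5 ^ l) ^ 2 := by
  classical
  have := Fintype.ofFinite R.G.edgeSet
  let B : Finset W :=
    Finset.biUnion {h | (medial R).edist g h ≤ l} fun h => (h : Sym2 W).toFinset
  have hB : #B ≤ 2 * 5 ^ l := by
    have h2 : ∀ h : R.G.edgeSet, #(h : Sym2 W).toFinset ≤ 2 := fun h =>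
      (Sym2.card_toFinset_of_not_isDiag _ (R.G.not_isDiag_of_mem_edgeSet h.2)).le
    rw [mul_comm]
    exact (Finset.card_biUnion_le_card_mul _ _ 2 fun h _ => h2 h).trans
      (Nat.mul_le_mul_right 2 (card_edist_le_le_pow (ncard_neighborSet_medial_le R) g l))
  have hmem : ∀ {h : R.G.edgeSet} {v}, v ∈ (h : Sym2 W) → (medial R).edist g h ≤ l → v ∈ B :=
    fun hv hh => Finset.mem_biUnion.2 ⟨_, by simpa using hh, Sym2.mem_toFinset.2 hv⟩
  calc #{i | g ∈ (p i).support}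
      ≤ #(B ×ˢ B) := Finset.card_le_card_of_injOn (fun i => (x i, y i)) (fun i hi => ?_)
          fun i _ j _ hij => hinj (congrArg (fun z : W × W => s(z.1, z.2)) hij)
    _ ≤ (2 * 5 ^ l) ^ 2 := by
        rw [Finset.card_product, ← sq]
        exact Nat.pow_le_pow_left hB 2
  have hg : g ∈ (p i).support := by simpa using hi
  have hstart : (medial R).edist g (e i) ≤ l := by
    rw [SimpleGraph.edist_comm]
    exact SimpleGraph.edist_le _ |>.trans
      (Nat.cast_le.2 (((p i).length_takeUntil_le_length hg).trans (hl i)))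
  have hend : (medial R).edist g (f i) ≤ l := SimpleGraph.edist_le _ |>.trans
      (Nat.cast_le.2 (((p i).length_dropUntil_le_length hg).trans (hl i)))
  exact Finset.mem_coe.2 (Finset.mk_mem_product (hmem (hx i) hstart) (hmem (hy i) hend))

variable {R} in
theorem RotationSystem.IsPlane.card_le_of_length_le [Finite W] {I : Type*} [Fintype I]
    (hR : R.IsPlane) {e f : I → R.G.edgeSet} (p : ∀ i, (medial R).Walk (e i) (f i)) {l : ℕ}
    (hl : ∀ i, (p i).length ≤ l) {x y : I → W} (hx : ∀ i, x i ∈ (e i : Sym2 W))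
    (hy : ∀ i, y i ∈ (f i : Sym2 W)) (hne : ∀ i, x i ≠ y i)
    (hinj : Function.Injective fun i => s(x i, y i)) {U : Finset W} (hxU : ∀ i, x i ∈ U)
    (hyU : ∀ i, y i ∈ U) : Fintype.card I ≤ 3 * ((l + 1) * (2 * 5 ^ l) ^ 2) * #U := by
  classical
  obtain ⟨J, hdisj, hJ⟩ := exists_pairwiseDisjoint_card_le (S := fun i => (p i).support.toFinset)
    (m := l + 1) (k := (2 * 5 ^ l) ^ 2)
    (fun i => ⟨_, List.mem_toFinset.2 (p i).start_mem_support⟩)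
    (fun i => (List.toFinset_card_le _).trans
      ((p i).length_support.trans_le (Nat.add_le_add_right (hl i) 1)))
    (fun g => by
      simpa only [List.mem_toFinset] using card_filter_mem_support_le R p hl hx hy hinj g)
  have hJU : Fintype.card J ≤ 3 * #U := by
    refine hR.card_le_of_disjoint_walks (fun j : J => p j) ?_ (fun j => hx j) (fun j => hy j)
      (fun j => hne j) (hinj.comp Subtype.val_injective) (fun j => hxU j) fun j => hyU j
    intro i j hij
    have h := hdisj i.2 j.2 (Subtype.val_injective.ne hij)
    simpa [Function.onFun, Set.disjoint_left, Finset.disjoint_left] using h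
  rw [Fintype.card_coe] at hJU
  calc Fintype.card I
      ≤ #J * ((l + 1) * (2 * 5 ^ l) ^ 2) := hJ
    _ ≤ 3 * #U * ((l + 1) * (2 * 5 ^ l) ^ 2) := Nat.mul_le_mul_right _ hJU
    _ = 3 * ((l + 1) * (2 * 5 ^ l) ^ 2) * #U := Nat.mul_right_comm _ _ _

theorem exists_medial_walk_of_wbwDist_le {x y : W} {l : ℕ} (h : wbwDist R x y ≤ l) :
    ∃ (e f : R.G.edgeSet) (p : (medial R).Walk e f),
      x ∈ (e : Sym2 W) ∧ y ∈ (f : Sym2 W) ∧ p.length ≤ l := by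
  have hne : {n : ℕ∞ | ∃ L, IsWbwWalkFromTo R x y L ∧ (L.length : ℕ∞) = n}.Nonempty := by
    by_contra! hempty
    rw [wbwDist, hempty, sInf_empty] at h
    exact ENat.natCast_ne_top l (top_le_iff.1 h)
  obtain ⟨L, ⟨⟨hL, hnodup, hedge, hchain⟩, ⟨e, he, hx⟩, ⟨f, hf, hy⟩⟩, hlen⟩ := csInf_mem hne
  have hLl : L.length ≤ l := Nat.cast_le.1 (hlen.trans_le h)
  lift L to List R.G.edgeSet using hedge
  have hL' : L ≠ [] := fun h => hL (congrArg _ h)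
  have hchain' : L.IsChain (medial R).Adj := by
    have hattached := (List.isChain_map _).1 hchain
    exact List.isChain_iff_getElem.2 fun i hi =>
      ⟨fun h => i.succ_ne_self (hnodup.of_map.getElem_inj_iff.1 h).symm,
        Or.inl (hattached.getElem i hi)⟩
  rw [List.head?_map, List.head?_eq_some_head hL', Option.map_some, Option.some_inj] at he
  rw [List.getLast?_map, List.getLast?_eq_some_getLast hL', Option.map_some, Option.some_inj] at hf
  refine ⟨_, _, .ofSupport L hL' hchain', he ▸ hx, hf ▸ hy, ?_⟩
  rw [SimpleGraph.Walk.length_ofSupport]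
  rw [List.length_map] at hLl
  exact (Nat.sub_le _ _).trans hLl

theorem exists_medial_walk_of_power_adj {l : ℕ} {x y : W} (h : (R.power l).Adj x y) :
    ∃ (e f : R.G.edgeSet) (p : (medial R).Walk e f),
      x ∈ (e : Sym2 W) ∧ y ∈ (f : Sym2 W) ∧ p.length ≤ l := by
  obtain hadj | ⟨-, hxy | hyx⟩ := h
  · exact ⟨⟨s(x, y), hadj⟩, _, .nil, Sym2.mem_mk_left x y, Sym2.mem_mk_right x y, Nat.zero_le l⟩
  · exact exists_medial_walk_of_wbwDist_le R hxy
  · obtain ⟨e, f, p, he, hf, hp⟩ := exists_medial_walk_of_wbwDist_le R hyx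
    exact ⟨f, e, p.reverse, hf, he, p.length_reverse.trans_le hp⟩

theorem IsFlat.card_edgeSet_le {V : Type*} {G : SimpleGraph V} {l : ℕ} (h : IsFlat l G) :
    Nat.card G.edgeSet ≤ 3 * ((l + 1) * (2 * 5 ^ l) ^ 2) * Nat.card V := by
  classical
  obtain ⟨W, _, R, τ, hR, hτ, hsub⟩ := h
  have := Finite.of_injective τ hτ
  have := Fintype.ofFinite V
  have hwalk : ∀ g : G.edgeSet, ∃ (a b : V) (e f : R.G.edgeSet) (p : (medial R).Walk e f),
      s(a, b) = g ∧ a ≠ b ∧ τ a ∈ (e : Sym2 W) ∧ τ b ∈ (f : Sym2 W) ∧ p.length ≤ l := by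
    rintro ⟨g, hg⟩
    induction g with | _ a b =>
    obtain ⟨e, f, p, h⟩ := exists_medial_walk_of_power_adj R (hsub a b hg)
    exact ⟨a, b, e, f, p, rfl, hg.ne, h⟩
  choose a b e f p hab hne ha hb hp using hwalk
  have hinj : Function.Injective fun g => s(τ (a g), τ (b g)) := fun g g' hgg' => by
    have h : s(a g, b g) = s(a g', b g') := Sym2.map.injective hτ hgg'
    exact Subtype.ext ((hab g).symm.trans (h.trans (hab g')))
  rw [Nat.card_eq_fintype_card, Nat.card_eq_fintype_card, ← Finset.card_univ (α := V),
    ← Finset.card_image_of_injective _ hτ]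
  exact hR.card_le_of_length_le p hp ha hb (fun g => hτ.ne (hne g)) hinj
    (fun g => Finset.mem_image_of_mem τ (Finset.mem_univ _))
    fun g => Finset.mem_image_of_mem τ (Finset.mem_univ _)

end WBW

theorem primrec_pow : Primrec₂ ((· ^ ·) : ℕ → ℕ → ℕ) :=
  Primrec₂.unpaired'.1 Nat.Primrec.pow

theorem computable_flat_bound :
    Computable fun l : ℕ => 3 * ((l + 1) * (2 * 5 ^ l) ^ 2) := by
  have hball : Primrec fun l : ℕ => 2 * 5 ^ l :=
    Primrec.nat_mul.comp (.const 2) (primrec_pow.comp (.const 5) .id)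
  exact (Primrec.nat_mul.comp (.const 3)
    (Primrec.nat_mul.comp .succ (primrec_pow.comp hball (.const 2)))).to_comp

/-- Corollary 1: there is a recursive function `f` such that every
`λ`-flat graph on `n` vertices has at most `f(λ) · n` edges. -/
theorem flat_sparse :
    ∃ f : ℕ → ℕ, Computable f ∧
      ∀ (V : Type) (G : SimpleGraph V), Finite V → ∀ l : ℕ,
        WBW.IsFlat l G → Nat.card G.edgeSet ≤ f l * Nat.card V :=
  ⟨_, computable_flat_bound, fun _ _ _ _ hG => hG.card_edgeSet_le⟩
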